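/- M(G,Y) is an E-unitary inverse monoid: the multiplication ((A,g),(B,h)) ↦ (A ∪ gB, gh) is well defined (A ∪ gB ∈ 𝒳_Y and gh ∈ V(A ∪ gB)) and associative; (Γ_1, 1) is a two-sided identity; every s = (A,g) satisfies s s⁻¹ s = s and s⁻¹ s s⁻¹ = s⁻¹, where s⁻¹ := (g⁻¹A, g⁻¹) ∈ M(G,Y); idempotents commute; the natural partial order satisfies (A,g) ≤ (B,h) iff g = h and B ⊆ A; two elements (A,g) and (B,h) are σ-related iff g = h; and M(G,Y) is E-unitary. -/

import Mathlib

namespace FInvPaper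

/-- The extended alphabet `Y = X ⊔ Ḡ`, with `Ḡ` a bijective copy of `G`. -/
abbrev YT (X G : Type*) := X ⊕ G

/-- The extension `ι_Y : Y → G` of the assignment map `ι : X → G`. -/
def iotaY {X G : Type*} (ι : X → G) : YT X G → G := Sum.elim ι id

/-- A (candidate) subgraph of `Cay(G,Y)`: a set of vertices together with a set
of positive edges, an edge `(a, y)` joining `a` to `a * ι_Y y`. -/
abbrev Graph (X G : Type*) := Set G × Set (G × YT X G)

variable {X G : Type*} [Group G]

/-- `Γ` is a finite subgraph of `Cay(G,Y)` containing the origin. -/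
def IsSubgraph (ι : X → G) (Γ : Graph X G) : Prop :=
  Γ.1.Finite ∧ Γ.2.Finite ∧ (1 : G) ∈ Γ.1 ∧
    ∀ e ∈ Γ.2, e.1 ∈ Γ.1 ∧ e.1 * iotaY ι e.2 ∈ Γ.1

/-- The relation on vertices given by the positive edges of `Γ`. -/
def edgeRel (ι : X → G) (Γ : Graph X G) (a b : G) : Prop :=
  ∃ y : YT X G, (a, y) ∈ Γ.2 ∧ b = a * iotaY ι y

/-- `Γ` is connected: every vertex is related to the origin `1` by the
equivalence relation generated by the edge relation. -/
def IsConn (ι : X → G) (Γ : Graph X G) : Prop :=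
  ∀ v ∈ Γ.1, Relation.EqvGen (edgeRel ι Γ) 1 v

/-- `𝒳_Y`: all finite connected subgraphs of `Cay(G,Y)` containing the origin. -/
def XY (ι : X → G) : Set (Graph X G) :=
  {Γ | IsSubgraph ι Γ ∧ IsConn ι Γ}

/-- The translate `gΓ`. -/
def gmul (g : G) (Γ : Graph X G) : Graph X G :=
  ((g * ·) '' Γ.1, (fun e => (g * e.1, e.2)) '' Γ.2)

/-- Componentwise union of graphs. -/
def gunion (Γ Δ : Graph X G) : Graph X G := (Γ.1 ∪ Δ.1, Γ.2 ∪ Δ.2)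

/-- Componentwise inclusion of graphs. -/
def gsub (Γ Δ : Graph X G) : Prop := Γ.1 ⊆ Δ.1 ∧ Γ.2 ⊆ Δ.2

/-- The closure `Γ^∧` of `Γ`: add the edge `(a, \overline{a⁻¹b})` for all
vertices `a, b` of `Γ`. -/
def clo (Γ : Graph X G) : Graph X G :=
  (Γ.1, Γ.2 ∪ {e : G × YT X G | ∃ a ∈ Γ.1, ∃ b ∈ Γ.1, e = (a, Sum.inr (a⁻¹ * b))})

/-- `Γ` is closed. -/
def IsClosedGr (Γ : Graph X G) : Prop :=
  ∀ a ∈ Γ.1, ∀ b ∈ Γ.1, (a, (Sum.inr (a⁻¹ * b) : YT X G)) ∈ Γ.2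

/-- `𝒳_Y^∧`: all closed graphs in `𝒳_Y`. -/
def XYw (ι : X → G) : Set (Graph X G) := {Γ | Γ ∈ XY ι ∧ IsClosedGr Γ}

/-- The graph `Γ_1` with single vertex `1` and no edges. -/
def gammaOne : Graph X G := ({1}, ∅)

/-- The graph `Γ_x` for `x ∈ X`. -/
def gammaX (ι : X → G) (x : X) : Graph X G :=
  ({1, ι x}, {((1 : G), (Sum.inl x : YT X G))})

/-- The graph `Γ_ḡ` for `g ∈ G`. -/
def gammaBar (g : G) : Graph X G :=
  ({1, g}, {((1 : G), (Sum.inr g : YT X G))})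

/-- Raw elements: pairs `(Γ, g)`. -/
abbrev Elt (X G : Type*) := Graph X G × G

/-- The carrier of `M(G,Y)`. -/
def Mset (ι : X → G) : Set (Elt X G) := {p | p.1 ∈ XY ι ∧ p.2 ∈ p.1.1}

/-- Multiplication of `M(G,Y)`: `(A,g)(B,h) = (A ∪ gB, gh)`. -/
def mulM (p q : Elt X G) : Elt X G := (gunion p.1 (gmul p.2 q.1), p.2 * q.2)

/-- Inversion: `(A,g)⁻¹ = (g⁻¹A, g⁻¹)`. -/
def invM (p : Elt X G) : Elt X G := (gmul p.2⁻¹ p.1, p.2⁻¹)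

/-- The carrier of `M^∧(G,Y)`. -/
def Mwedge (ι : X → G) : Set (Elt X G) := {p | p.1 ∈ XYw ι ∧ p.2 ∈ p.1.1}

/-- Multiplication of `M^∧(G,Y)`: `(A,g)(B,h) = ((A ∪ gB)^∧, gh)`. -/
def mulW (p q : Elt X G) : Elt X G := (clo (gunion p.1 (gmul p.2 q.1)), p.2 * q.2)

/-- Natural partial order of `M^∧(G,Y)`: `s ≤ t` iff `s = s s⁻¹ t`. -/
def nleW (p q : Elt X G) : Prop := p = mulW (mulW p (invM p)) q

/-- Minimum group congruence `σ` of `M^∧(G,Y)`. -/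
def sigmaW (ι : X → G) (p q : Elt X G) : Prop :=
  ∃ u ∈ Mwedge ι, nleW u p ∧ nleW u q

/-- The `m`-operation of `M^∧(G,Y)`: `m(A, g) = (Γ_ḡ^∧, g)`. -/
def mW (p : Elt X G) : Elt X G := (clo (gammaBar p.2), p.2)

/-- Natural partial order of `M(G,Y)`. -/
def nleM (p q : Elt X G) : Prop := p = mulM (mulM p (invM p)) q

/-- Minimum group congruence `σ` of `M(G,Y)`. -/
def sigmaM (ι : X → G) (p q : Elt X G) : Prop :=
  ∃ u ∈ Mset ι, nleM u p ∧ nleM u q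

end FInvPaper

namespace FInvPaper


section Helpers

variable {X G : Type*} [Group G]

lemma gmul_gmul (g h : G) (A : Graph X G) : gmul g (gmul h A) = gmul (g * h) A := by
  simp only [gmul, Set.image_image, mul_assoc]

lemma gmul_one' (A : Graph X G) : gmul 1 A = A := by
  simp [gmul]

lemma gmul_gunion (g : G) (A B : Graph X G) :
    gmul g (gunion A B) = gunion (gmul g A) (gmul g B) := by
  simp [gmul, gunion, Set.image_union]

lemma gunion_assoc (A B C : Graph X G) :
    gunion (gunion A B) C = gunion A (gunion B C) := by
  simp [gunion, Set.union_assoc]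

lemma gunion_comm (A B : Graph X G) : gunion A B = gunion B A := by
  simp [gunion, Set.union_comm]

lemma gunion_self (A : Graph X G) : gunion A A = A := by
  simp [gunion]

lemma gsub_iff (A B : Graph X G) : gsub B A ↔ A = gunion A B := by
  rw [eq_comm]
  simp [gsub, gunion, Prod.ext_iff]

lemma edgeRel_mono (ι : X → G) {A B : Graph X G} (h : A.2 ⊆ B.2) {a b : G}
    (hab : Relation.EqvGen (edgeRel ι A) a b) : Relation.EqvGen (edgeRel ι B) a b :=
  hab.mono fun _ _ ⟨y, hy, e⟩ => ⟨y, h hy, e⟩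

lemma edgeRel_gmul (ι : X → G) (g : G) {A : Graph X G} {a b : G}
    (hab : Relation.EqvGen (edgeRel ι A) a b) :
    Relation.EqvGen (edgeRel ι (gmul g A)) (g * a) (g * b) := by
  induction hab with
  | rel a b h =>
    obtain ⟨y, hy, rfl⟩ := h
    exact .rel _ _ ⟨y, ⟨(a, y), hy, rfl⟩, (mul_assoc _ _ _).symm⟩
  | refl a => exact .refl _
  | symm a b _ ih => exact .symm _ _ ih
  | trans a b c _ _ h1 h2 => exact .trans _ _ _ h1 h2

lemma mulM_mem (ι : X → G) {p q : Elt X G} (hp : p ∈ Mset ι) (hq : q ∈ Mset ι) :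
    mulM p q ∈ Mset ι := by
  obtain ⟨⟨A, B⟩, g⟩ := p
  obtain ⟨⟨C, D⟩, h⟩ := q
  obtain ⟨⟨⟨hA, hB, h1, hE⟩, hc⟩, hg⟩ := hp
  obtain ⟨⟨⟨hC, hD, h1', hE'⟩, hc'⟩, hh⟩ := hq
  refine ⟨⟨⟨hA.union (hC.image _), hB.union (hD.image _), Or.inl h1, ?_⟩, ?_⟩,
    Or.inr ⟨h, hh, rfl⟩⟩
  · rintro e (he | ⟨e, he, rfl⟩)
    · exact ⟨Or.inl (hE e he).1, Or.inl (hE e he).2⟩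
    · exact ⟨Or.inr ⟨_, (hE' e he).1, rfl⟩, Or.inr ⟨_, (hE' e he).2, (mul_assoc _ _ _).symm⟩⟩
  · rintro v (hv | ⟨v, hv, rfl⟩)
    · exact edgeRel_mono ι Set.subset_union_left (hc v hv)
    · have h2 := edgeRel_gmul ι g (hc' v hv)
      rw [mul_one] at h2
      exact .trans _ _ _ (edgeRel_mono ι Set.subset_union_left (hc g hg))
        (edgeRel_mono ι Set.subset_union_right h2)

lemma invM_mem (ι : X → G) {p : Elt X G} (hp : p ∈ Mset ι) : invM p ∈ Mset ι := by
  obtain ⟨⟨A, B⟩, g⟩ := p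
  obtain ⟨⟨⟨hA, hB, h1, hE⟩, hc⟩, hg⟩ := hp
  refine ⟨⟨⟨hA.image _, hB.image _, ⟨g, hg, inv_mul_cancel g⟩, ?_⟩, ?_⟩,
    ⟨1, h1, mul_one _⟩⟩
  · rintro e ⟨e, he, rfl⟩
    exact ⟨⟨_, (hE e he).1, rfl⟩, ⟨_, (hE e he).2, (mul_assoc _ _ _).symm⟩⟩
  · rintro v ⟨v, hv, rfl⟩
    have h2 := edgeRel_gmul ι g⁻¹ (Relation.EqvGen.trans _ _ _ (.symm _ _ (hc g hg)) (hc v hv))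
    rw [inv_mul_cancel] at h2
    exact h2

lemma mulM_self_iff (p : Elt X G) : mulM p p = p ↔ p.2 = 1 := by
  obtain ⟨A, g⟩ := p
  constructor
  · intro h
    have := congrArg Prod.snd h
    simpa [mulM] using this
  · rintro h
    obtain rfl : g = 1 := h
    simp [mulM, gmul_one', gunion_self]

lemma nleM_iff (p q : Elt X G) : nleM p q ↔ p.2 = q.2 ∧ gsub q.1 p.1 := by
  obtain ⟨A, g⟩ := p
  obtain ⟨B, h⟩ := q
  rw [gsub_iff]
  simp only [nleM, mulM, invM, gmul_gmul, mul_inv_cancel, gmul_one', gunion_self, one_mul,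
    Prod.mk.injEq]
  exact and_comm

lemma sigmaM_iff (ι : X → G) {p q : Elt X G} (hp : p ∈ Mset ι) (hq : q ∈ Mset ι) :
    sigmaM ι p q ↔ p.2 = q.2 := by
  constructor
  · rintro ⟨u, -, h1, h2⟩
    rw [nleM_iff] at h1 h2
    exact h1.1.symm.trans h2.1
  · intro h
    have h1 : ((p.1, 1) : Elt X G) ∈ Mset ι := ⟨hp.1, hp.1.1.2.2.1⟩
    refine ⟨_, mulM_mem ι h1 hq, ?_, ?_⟩
    · rw [nleM_iff]
      exact ⟨by simp [mulM, h], Set.subset_union_left, Set.subset_union_left⟩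
    · rw [nleM_iff]
      refine ⟨by simp [mulM], ?_⟩
      simp only [mulM, gmul_one']
      exact ⟨Set.subset_union_right, Set.subset_union_right⟩

end Helpers

/-- `M(G,Y)` is an `E`-unitary inverse monoid: the
multiplication `((A,g),(B,h)) ↦ (A ∪ gB, gh)` is well defined and associative,
`(Γ_1, 1)` is a two-sided identity, `(A,g)⁻¹ = (g⁻¹A, g⁻¹)` gives inverses,
idempotents commute, the natural partial order is `(A,g) ≤ (B,h)` iff `g = h`
and `B ⊆ A`, two elements are `σ`-related iff their group components coincide,
and `M(G,Y)` is `E`-unitary. -/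
theorem MGY_EUnitary_inverseMonoid {X G : Type*} [Nonempty X] [Group G] (ι : X → G)
    (hgen : Subgroup.closure (Set.range ι) = ⊤) :
    -- well-definedness of the multiplication
    (∀ p q : Elt X G, p ∈ Mset ι → q ∈ Mset ι →
      (mulM p q).1 ∈ XY ι ∧ (mulM p q).2 ∈ (mulM p q).1.1) ∧
    -- associativity
    (∀ p q r : Elt X G, p ∈ Mset ι → q ∈ Mset ι → r ∈ Mset ι →
      mulM (mulM p q) r = mulM p (mulM q r)) ∧
    -- `(Γ_1, 1)` is a two-sided identity
    (∀ p : Elt X G, p ∈ Mset ι →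
      mulM ((gammaOne, 1) : Elt X G) p = p ∧ mulM p ((gammaOne, 1) : Elt X G) = p) ∧
    -- inverses
    (∀ p : Elt X G, p ∈ Mset ι → invM p ∈ Mset ι ∧
      mulM (mulM p (invM p)) p = p ∧ mulM (mulM (invM p) p) (invM p) = invM p) ∧
    -- idempotents commute
    (∀ p q : Elt X G, p ∈ Mset ι → q ∈ Mset ι →
      mulM p p = p → mulM q q = q → mulM p q = mulM q p) ∧
    -- the natural partial order
    (∀ p q : Elt X G, p ∈ Mset ι → q ∈ Mset ι →
      (nleM p q ↔ p.2 = q.2 ∧ gsub q.1 p.1)) ∧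
    -- the minimum group congruence
    (∀ p q : Elt X G, p ∈ Mset ι → q ∈ Mset ι → (sigmaM ι p q ↔ p.2 = q.2)) ∧
    -- `E`-unitarity
    (∀ p q : Elt X G, p ∈ Mset ι → q ∈ Mset ι →
      mulM p p = p → nleM p q → mulM q q = q) := by
  refine ⟨fun p q hp hq => mulM_mem ι hp hq, ?_, ?_, ?_, ?_, fun p q _ _ => nleM_iff p q,
    fun p q hp hq => sigmaM_iff ι hp hq, ?_⟩
  · intro p q r _ _ _
    simp only [mulM, gmul_gunion, gmul_gmul, gunion_assoc, mul_assoc]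
  · rintro ⟨⟨A, B⟩, g⟩ hp
    have h1 : (1 : G) ∈ A := hp.1.1.2.2.1
    have hg : g ∈ A := hp.2
    constructor
    · simp only [mulM, gmul_one', one_mul]
      simp [gunion, gammaOne, h1]
    · simp [mulM, gunion, gmul, gammaOne, hg]
  · intro p hp
    refine ⟨invM_mem ι hp, ?_, ?_⟩
    · simp only [mulM, invM, gmul_gmul, mul_inv_cancel, gmul_one', gunion_self, one_mul]
    · simp only [mulM, invM, gmul_gmul, inv_mul_cancel, gunion_self, one_mul]
  · intro p q _ _ h1 h2
    rw [mulM_self_iff] at h1 h2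
    simp only [mulM, h1, h2, gmul_one', gunion_comm]
  · intro p q _ _ h1 h2
    rw [mulM_self_iff] at h1 ⊢
    rw [nleM_iff] at h2
    exact h2.1.symm.trans h1

end FInvPaper
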